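/- Let p, q > 1. Then arctan_{p,q}, the inverse function of tan_{p,q}, is increasing and concave on (0,1). -/

import Mathlib

open Real Set

/-- `arcsinPQ p q x = ∫₀ˣ (1 - tᵠ)^(-1/p) dt`, the generalized inverse sine. -/
noncomputable def arcsinPQ (p q x : ℝ) : ℝ := ∫ t in (0:ℝ)..x, (1 - t ^ q) ^ (-(1/p))

/-- `sinPQ p q` is the inverse function of `arcsinPQ p q` (restricted to `[0,1]`). -/
noncomputable def sinPQ (p q : ℝ) : ℝ → ℝ := Function.invFunOn (arcsinPQ p q) (Set.Icc 0 1)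

/-- `cosPQ p q x = (1 - sinPQ p q x ^ q)^(1/p)`. -/
noncomputable def cosPQ (p q x : ℝ) : ℝ := (1 - sinPQ p q x ^ q) ^ (1/p)

/-- `tanPQ p q x = sinPQ p q x / cosPQ p q x`. -/
noncomputable def tanPQ (p q x : ℝ) : ℝ := sinPQ p q x / cosPQ p q x

/-- `arctanPQ p q` is the inverse function of `tanPQ p q` (restricted to `(0, π_{p,q}/2)`). -/
noncomputable def arctanPQ (p q : ℝ) : ℝ → ℝ :=
  Function.invFunOn (tanPQ p q) (Set.Ioo 0 (arcsinPQ p q 1))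

/-- The integrand `(1 - tᵠ)^(-1/p)` of `arcsinPQ` is positive on `(0,1)`. -/
lemma arcsinPQ_integrand_pos (p : ℝ) {q t : ℝ} (hq : 1 < q) (ht : t ∈ Ioo (0:ℝ) 1) :
    0 < (1 - t ^ q) ^ (-(1/p)) :=
  rpow_pos_of_pos (sub_pos.2 (rpow_lt_one ht.1.le ht.2 (by linarith))) _

lemma intervalIntegrable_arcsinPQ_integrand {p q : ℝ} (hp : 1 < p) (hq : 1 < q) :
    IntervalIntegrable (fun t : ℝ => (1 - t ^ q) ^ (-(1/p))) MeasureTheory.volume 0 1 := by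
  have hp' : 1 / p < 1 := by rw [div_lt_one (by linarith)]; exact hp
  have hp0 : 0 < 1 / p := by positivity
  have hdom : IntervalIntegrable (fun t : ℝ => (1 - t) ^ (-(1/p))) MeasureTheory.volume 0 1 := by
    have h := (intervalIntegral.intervalIntegrable_rpow' (a := 1) (b := 0)
      (r := -(1/p)) (by linarith)).comp_sub_left 1
    simpa using h
  refine hdom.mono_fun (Measurable.aestronglyMeasurable (by fun_prop)) ?_
  rw [uIoc_of_le zero_le_one, ← MeasureTheory.restrict_Ioo_eq_restrict_Ioc]
  filter_upwards [MeasureTheory.ae_restrict_mem measurableSet_Ioo] with t ht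
  have htq : t ^ q ≤ t := by
    simpa using rpow_le_rpow_of_exponent_ge ht.1 ht.2.le hq.le
  rw [norm_of_nonneg (arcsinPQ_integrand_pos p hq ht).le,
    norm_of_nonneg (rpow_nonneg (by linarith [ht.2]) _)]
  exact rpow_le_rpow_of_nonpos (by linarith [ht.2]) (by linarith) (by linarith)

lemma intervalIntegrable_arcsinPQ_integrand_of_mem {p q a b : ℝ} (hp : 1 < p) (hq : 1 < q)
    (ha : a ∈ Icc (0:ℝ) 1) (hb : b ∈ Icc (0:ℝ) 1) :
    IntervalIntegrable (fun t : ℝ => (1 - t ^ q) ^ (-(1/p))) MeasureTheory.volume a b := by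
  refine (intervalIntegrable_arcsinPQ_integrand hp hq).mono_set ?_
  rw [uIcc_of_le zero_le_one]
  exact uIcc_subset_Icc ha hb

@[simp] lemma arcsinPQ_zero (p q : ℝ) : arcsinPQ p q 0 = 0 := by simp [arcsinPQ]

lemma strictMonoOn_arcsinPQ {p q : ℝ} (hp : 1 < p) (hq : 1 < q) :
    StrictMonoOn (arcsinPQ p q) (Icc 0 1) := by
  intro a ha b hb hab
  have h0 : (0:ℝ) ∈ Icc (0:ℝ) 1 := by simp
  have hint := intervalIntegrable_arcsinPQ_integrand_of_mem hp hq ha hb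
  have hsub := intervalIntegral.integral_interval_sub_left
    (intervalIntegrable_arcsinPQ_integrand_of_mem hp hq h0 hb)
    (intervalIntegrable_arcsinPQ_integrand_of_mem hp hq h0 ha)
  have hpos := intervalIntegral.intervalIntegral_pos_of_pos_on hint
    (fun t ht => arcsinPQ_integrand_pos p hq ⟨ha.1.trans_lt ht.1, ht.2.trans_le hb.2⟩) hab
  unfold arcsinPQ
  linarith

lemma continuousOn_arcsinPQ {p q : ℝ} (hp : 1 < p) (hq : 1 < q) :
    ContinuousOn (arcsinPQ p q) (Icc 0 1) := by
  have h := intervalIntegral.continuousOn_primitive_interval'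
    (intervalIntegrable_arcsinPQ_integrand hp hq) left_mem_uIcc
  rwa [uIcc_of_le zero_le_one] at h

lemma hasDerivAt_arcsinPQ {p q s : ℝ} (hp : 1 < p) (hq : 1 < q) (hs : s ∈ Ioo (0:ℝ) 1) :
    HasDerivAt (arcsinPQ p q) ((1 - s ^ q) ^ (-(1/p))) s := by
  have hpos : 0 < 1 - s ^ q := sub_pos.2 (rpow_lt_one hs.1.le hs.2 (by linarith))
  refine intervalIntegral.integral_hasDerivAt_right
    (intervalIntegrable_arcsinPQ_integrand_of_mem hp hq (by simp) (Ioo_subset_Icc_self hs))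
    (Measurable.stronglyMeasurable (by fun_prop)).stronglyMeasurableAtFilter ?_
  exact (continuousAt_const.sub
    (continuousAt_id.rpow_const (Or.inl hs.1.ne'))).rpow_const (Or.inl hpos.ne')

lemma sinPQ_arcsinPQ {p q s : ℝ} (hp : 1 < p) (hq : 1 < q) (hs : s ∈ Icc (0:ℝ) 1) :
    sinPQ p q (arcsinPQ p q s) = s :=
  (strictMonoOn_arcsinPQ hp hq).injOn.leftInvOn_invFunOn hs

lemma image_arcsinPQ_Ioo {p q : ℝ} (hp : 1 < p) (hq : 1 < q) :
    arcsinPQ p q '' Ioo 0 1 = Ioo 0 (arcsinPQ p q 1) := by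
  have hmono := strictMonoOn_arcsinPQ hp hq
  apply Subset.antisymm
  · rintro _ ⟨s, hs, rfl⟩
    have hsI := Ioo_subset_Icc_self hs
    refine ⟨?_, hmono hsI (by simp) hs.2⟩
    simpa using hmono (by simp) hsI hs.1
  · simpa using intermediate_value_Ioo zero_le_one (continuousOn_arcsinPQ hp hq)

/-- The tangent as a function of the sine: `tanPQ p q = tanOfSin p q ∘ sinPQ p q`. -/
noncomputable def tanOfSin (p q s : ℝ) : ℝ := s / (1 - s ^ q) ^ (1/p)

lemma tanPQ_arcsinPQ {p q s : ℝ} (hp : 1 < p) (hq : 1 < q) (hs : s ∈ Icc (0:ℝ) 1) :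
    tanPQ p q (arcsinPQ p q s) = tanOfSin p q s := by
  simp [tanPQ, cosPQ, tanOfSin, sinPQ_arcsinPQ hp hq hs]

/-- The ratio of the derivatives of `tanOfSin p q` and `arcsinPQ p q`. -/
noncomputable def tanDerivRatio (p q s : ℝ) : ℝ := 1 + q / p * (s ^ q / (1 - s ^ q))

lemma hasDerivAt_tanOfSin {p q s : ℝ} (hq : 1 < q) (hs : s ∈ Ioo (0:ℝ) 1) :
    HasDerivAt (tanOfSin p q) ((1 - s ^ q) ^ (-(1/p)) * tanDerivRatio p q s) s := by
  have hpos : 0 < 1 - s ^ q := sub_pos.2 (rpow_lt_one hs.1.le hs.2 (by linarith))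
  have hbase : HasDerivAt (fun t : ℝ => 1 - t ^ q) (-(q * s ^ (q - 1))) s :=
    (hasDerivAt_rpow_const (Or.inl hs.1.ne')).const_sub 1
  have h := (hasDerivAt_id s).mul (hbase.rpow_const (p := -(1/p)) (Or.inl hpos.ne'))
  have heq : tanOfSin p q =ᶠ[nhds s] (id * fun t : ℝ => (1 - t ^ q) ^ (-(1/p))) := by
    filter_upwards [isOpen_Ioo.mem_nhds hs] with t ht
    have : 0 ≤ 1 - t ^ q := (sub_pos.2 (rpow_lt_one ht.1.le ht.2 (by linarith))).le
    simp only [tanOfSin, Pi.mul_apply, id, rpow_neg this, div_eq_mul_inv]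
  refine (h.congr_of_eventuallyEq heq).congr_deriv ?_
  have h1 : (1 - s ^ q) ^ (-(1/p) - 1) = (1 - s ^ q) ^ (-(1/p)) / (1 - s ^ q) :=
    rpow_sub_one hpos.ne' _
  have h2 : s ^ (q - 1) = s ^ q / s := rpow_sub_one hs.1.ne' _
  have hs0 := hs.1.ne'
  simp only [h1, h2, tanDerivRatio, id]
  generalize (1 - s ^ q) ^ (-(1/p)) = A
  field_simp

lemma tanDerivRatio_pos {p q s : ℝ} (hp : 1 < p) (hq : 1 < q) (hs : s ∈ Ioo (0:ℝ) 1) :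
    0 < tanDerivRatio p q s := by
  have hpos : 0 < 1 - s ^ q := sub_pos.2 (rpow_lt_one hs.1.le hs.2 (by linarith))
  have := rpow_pos_of_pos hs.1 q
  unfold tanDerivRatio
  positivity

lemma monotoneOn_tanDerivRatio {p q : ℝ} (hp : 1 < p) (hq : 1 < q) :
    MonotoneOn (tanDerivRatio p q) (Ioo 0 1) := by
  intro a ha b hb hab
  have hb1 : 0 < 1 - b ^ q := sub_pos.2 (rpow_lt_one hb.1.le hb.2 (by linarith))
  have h0 := rpow_nonneg hb.1.le q
  have hle : a ^ q ≤ b ^ q := rpow_le_rpow ha.1.le hab (by linarith)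
  unfold tanDerivRatio
  gcongr

lemma exists_tanOfSin_sub_eq {p q a b : ℝ} (hp : 1 < p) (hq : 1 < q)
    (ha : a ∈ Ioo (0:ℝ) 1) (hb : b ∈ Ioo (0:ℝ) 1) (hab : a < b) :
    ∃ c ∈ Ioo a b, tanOfSin p q b - tanOfSin p q a =
      (arcsinPQ p q b - arcsinPQ p q a) * tanDerivRatio p q c := by
  have hsub : Icc a b ⊆ Ioo (0:ℝ) 1 := fun t ht => ⟨ha.1.trans_le ht.1, ht.2.trans_lt hb.2⟩
  obtain ⟨c, hc, h⟩ := exists_ratio_hasDerivAt_eq_ratio_slope (arcsinPQ p q) _ hab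
    (fun t ht => (hasDerivAt_arcsinPQ hp hq (hsub ht)).continuousAt.continuousWithinAt)
    (fun t ht => hasDerivAt_arcsinPQ hp hq (hsub (Ioo_subset_Icc_self ht)))
    (tanOfSin p q) _
    (fun t ht => (hasDerivAt_tanOfSin hq (hsub ht)).continuousAt.continuousWithinAt)
    (fun t ht => hasDerivAt_tanOfSin (p := p) hq (hsub (Ioo_subset_Icc_self ht)))
  refine ⟨c, hc, ?_⟩
  have hpos := arcsinPQ_integrand_pos p hq (hsub (Ioo_subset_Icc_self hc))
  exact mul_right_cancel₀ hpos.ne' (by linarith)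

lemma strictMonoOn_tanOfSin {p q : ℝ} (hp : 1 < p) (hq : 1 < q) :
    StrictMonoOn (tanOfSin p q) (Ioo 0 1) := by
  intro a ha b hb hab
  obtain ⟨c, hc, h⟩ := exists_tanOfSin_sub_eq hp hq ha hb hab
  have hF := strictMonoOn_arcsinPQ hp hq (Ioo_subset_Icc_self ha) (Ioo_subset_Icc_self hb) hab
  have hk := tanDerivRatio_pos hp hq ⟨ha.1.trans hc.1, hc.2.trans hb.2⟩
  have := mul_pos (sub_pos.2 hF) hk
  linarith

lemma surjOn_tanOfSin {p q : ℝ} (hp : 1 < p) (hq : 1 < q) :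
    SurjOn (tanOfSin p q) (Ioo 0 1) (Ioi 0) := by
  intro u hu
  have hu : 0 < u := hu
  have hq0 : q ≠ 0 := by linarith
  have hp0 : p ≠ 0 := by linarith
  have hcont : Continuous (fun s : ℝ => s - u * (1 - s ^ q) ^ (1/p)) := by
    have hp1 : 0 ≤ 1 / p := by positivity
    exact continuous_id.sub (continuous_const.mul ((continuous_const.sub
      (continuous_id.rpow_const fun _ => Or.inr (by linarith))).rpow_const fun _ => Or.inr hp1))
  obtain ⟨s, hs, h⟩ := intermediate_value_Ioo (zero_le_one' ℝ) hcont.continuousOn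
    (show (0:ℝ) ∈ Ioo _ _ by simp [hu, hp0, hq0])
  have hpos : 0 < 1 - s ^ q := sub_pos.2 (rpow_lt_one hs.1.le hs.2 (by linarith))
  refine ⟨s, hs, ?_⟩
  rw [tanOfSin, div_eq_iff (rpow_pos_of_pos hpos _).ne']
  linarith [show s - u * (1 - s ^ q) ^ (1/p) = 0 from h]

lemma arctanPQ_tanOfSin {p q s : ℝ} (hp : 1 < p) (hq : 1 < q) (hs : s ∈ Ioo (0:ℝ) 1) :
    arctanPQ p q (tanOfSin p q s) = arcsinPQ p q s := by
  have hinj : InjOn (tanPQ p q) (Ioo 0 (arcsinPQ p q 1)) := by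
    rw [← image_arcsinPQ_Ioo hp hq]
    rintro _ ⟨a, ha, rfl⟩ _ ⟨b, hb, rfl⟩ h
    rw [tanPQ_arcsinPQ hp hq (Ioo_subset_Icc_self ha),
      tanPQ_arcsinPQ hp hq (Ioo_subset_Icc_self hb)] at h
    rw [(strictMonoOn_tanOfSin hp hq).injOn ha hb h]
  rw [← tanPQ_arcsinPQ hp hq (Ioo_subset_Icc_self hs)]
  exact hinj.leftInvOn_invFunOn (image_arcsinPQ_Ioo hp hq ▸ mem_image_of_mem _ hs)

lemma strictMonoOn_arctanPQ {p q : ℝ} (hp : 1 < p) (hq : 1 < q) :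
    StrictMonoOn (arctanPQ p q) (Ioi 0) := by
  intro x hx y hy hxy
  obtain ⟨a, ha, rfl⟩ := surjOn_tanOfSin hp hq hx
  obtain ⟨b, hb, rfl⟩ := surjOn_tanOfSin hp hq hy
  rw [arctanPQ_tanOfSin hp hq ha, arctanPQ_tanOfSin hp hq hb]
  exact strictMonoOn_arcsinPQ hp hq (Ioo_subset_Icc_self ha) (Ioo_subset_Icc_self hb)
    (((strictMonoOn_tanOfSin hp hq).lt_iff_lt ha hb).1 hxy)

lemma concaveOn_arctanPQ {p q : ℝ} (hp : 1 < p) (hq : 1 < q) :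
    ConcaveOn ℝ (Ioi 0) (arctanPQ p q) := by
  refine concaveOn_of_slope_anti_adjacent (convex_Ioi 0) ?_
  intro x y z hx hz hxy hyz
  obtain ⟨a, ha, rfl⟩ := surjOn_tanOfSin hp hq hx
  obtain ⟨b, hb, rfl⟩ := surjOn_tanOfSin hp hq (lt_trans hx hxy)
  obtain ⟨c, hc, rfl⟩ := surjOn_tanOfSin hp hq hz
  have hmono := strictMonoOn_tanOfSin hp hq
  have hab := (hmono.lt_iff_lt ha hb).1 hxy
  have hbc := (hmono.lt_iff_lt hb hc).1 hyz
  obtain ⟨d, hd, hTd⟩ := exists_tanOfSin_sub_eq hp hq ha hb hab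
  obtain ⟨e, he, hTe⟩ := exists_tanOfSin_sub_eq hp hq hb hc hbc
  have hdI : d ∈ Ioo (0:ℝ) 1 := ⟨ha.1.trans hd.1, hd.2.trans hb.2⟩
  have heI : e ∈ Ioo (0:ℝ) 1 := ⟨hb.1.trans he.1, he.2.trans hc.2⟩
  have hF := strictMonoOn_arcsinPQ hp hq
  have hFab := sub_pos.2 (hF (Ioo_subset_Icc_self ha) (Ioo_subset_Icc_self hb) hab)
  have hFbc := sub_pos.2 (hF (Ioo_subset_Icc_self hb) (Ioo_subset_Icc_self hc) hbc)
  rw [arctanPQ_tanOfSin hp hq ha, arctanPQ_tanOfSin hp hq hb, arctanPQ_tanOfSin hp hq hc,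
    hTd, hTe, div_mul_cancel_left₀ hFab.ne', div_mul_cancel_left₀ hFbc.ne']
  exact inv_anti₀ (tanDerivRatio_pos hp hq hdI)
    (monotoneOn_tanDerivRatio hp hq hdI heI (hd.2.trans he.1).le)

theorem arctanPQ_strictMono_concave (p q : ℝ) (hp : 1 < p) (hq : 1 < q) :
    StrictMonoOn (arctanPQ p q) (Set.Ioo 0 1) ∧
      ConcaveOn ℝ (Set.Ioo 0 1) (arctanPQ p q) :=
  ⟨(strictMonoOn_arctanPQ hp hq).mono Ioo_subset_Ioi_self,
    (concaveOn_arctanPQ hp hq).subset Ioo_subset_Ioi_self (convex_Ioo 0 1)⟩
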